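/- Every automorphism of the graph Ξ_I is also an automorphism of the graph Π_I; that is, every automorphism of Ξ_I permutes the three extra edges {1,3}, {0,2}, {4,5} among themselves and preserves the edge set of Π_I. -/

import Mathlib

/-- The ten faces of the hemi-icosahedron on vertex set `Fin 6`. -/
def faces : Finset (Finset (Fin 6)) :=
  {{0,1,2}, {0,2,3}, {0,3,4}, {0,4,5}, {0,5,1}, {1,2,4}, {2,3,5}, {1,3,4}, {2,4,5}, {1,3,5}}

/-- The 16-element vertex set: `Fin 6` together with the ten faces. -/
abbrev V16 := Fin 6 ⊕ {f : Finset (Fin 6) // f ∈ faces}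

/-- Vertex-face incidence: `v : Fin 6` is incident to a face `f` iff `v ∈ f`. -/
def piRel : V16 → V16 → Prop := fun a b =>
  match a, b with
  | Sum.inl v, Sum.inr f => v ∈ f.1
  | _, _ => False

instance : DecidableRel piRel := fun a b =>
  match a, b with
  | Sum.inl v, Sum.inr f => inferInstanceAs (Decidable (v ∈ f.1))
  | Sum.inl _, Sum.inl _ => Decidable.isFalse id
  | Sum.inr _, Sum.inl _ => Decidable.isFalse id
  | Sum.inr _, Sum.inr _ => Decidable.isFalse id

/-- `Π_I`, the projective vertex-face graph of the icosahedron (vertex-face graph of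
the hemi-icosahedron): `v : Fin 6` is adjacent to `f ∈ faces` iff `v ∈ f`. -/
def piI : SimpleGraph V16 := SimpleGraph.fromRel piRel

instance : DecidableRel piI.Adj := fun a b =>
  decidable_of_iff _ (SimpleGraph.fromRel_adj piRel a b).symm

/-- The relation of `Π_I` together with the three extra edges `{1,3}`, `{0,2}`, `{4,5}`. -/
def xiRel : V16 → V16 → Prop := fun a b =>
  match a, b with
  | Sum.inl v, Sum.inr f => v ∈ f.1
  | Sum.inl v, Sum.inl w => (v = 1 ∧ w = 3) ∨ (v = 0 ∧ w = 2) ∨ (v = 4 ∧ w = 5)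
  | _, _ => False

instance : DecidableRel xiRel := fun a b =>
  match a, b with
  | Sum.inl v, Sum.inr f => inferInstanceAs (Decidable (v ∈ f.1))
  | Sum.inl v, Sum.inl w =>
      inferInstanceAs (Decidable ((v = 1 ∧ w = 3) ∨ (v = 0 ∧ w = 2) ∨ (v = 4 ∧ w = 5)))
  | Sum.inr _, Sum.inl _ => Decidable.isFalse id
  | Sum.inr _, Sum.inr _ => Decidable.isFalse id

/-- `Ξ_I`: the graph `Π_I` with the three extra edges `{1,3}`, `{0,2}`, `{4,5}` added. -/
def xiI : SimpleGraph V16 := SimpleGraph.fromRel xiRel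

instance : DecidableRel xiI.Adj := fun a b =>
  decidable_of_iff _ (SimpleGraph.fromRel_adj xiRel a b).symm

/-!
In `Ξ_I` every vertex of the hemi-icosahedron has degree 6 (the five faces around it and one extra
edge), while every face has degree 3. Hence the edges of `Π_I` are exactly the edges of `Ξ_I` whose
ends have different degrees, a description that automorphisms of `Ξ_I` respect.
-/

section DegreeChanging

variable {V W : Type*} {G : SimpleGraph V} {H : SimpleGraph W} [G.LocallyFinite] [H.LocallyFinite]

variable (G) in
/-- The spanning subgraph of `G` formed by the edges whose two ends have different degrees.
It recovers `Π_I` from `Ξ_I`. -/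
def degreeChangingSubgraph : SimpleGraph V where
  Adj v w := G.Adj v w ∧ G.degree v ≠ G.degree w
  symm := ⟨fun _ _ h => ⟨h.1.symm, h.2.symm⟩⟩
  loopless := ⟨fun _ h => h.2 rfl⟩

theorem degreeChangingSubgraph_adj {v w : V} :
    (degreeChangingSubgraph G).Adj v w ↔ G.Adj v w ∧ G.degree v ≠ G.degree w :=
  Iff.rfl

theorem degreeChangingSubgraph_map_adj_iff (φ : G ≃g H) {v w : V} :
    (degreeChangingSubgraph H).Adj (φ v) (φ w) ↔ (degreeChangingSubgraph G).Adj v w := by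
  rw [degreeChangingSubgraph_adj, degreeChangingSubgraph_adj, φ.map_adj_iff, φ.degree_eq,
    φ.degree_eq]

end DegreeChanging

theorem card_of_mem_faces {f : Finset (Fin 6)} (hf : f ∈ faces) : f.card = 3 := by
  revert f
  decide

theorem card_faces_containing (v : Fin 6) :
    (Finset.univ.filter fun f : {f // f ∈ faces} => v ∈ f.1).card = 5 := by
  decide +revert

/-- The involution of `Fin 6` that swaps the two ends of each extra edge `{1,3}`, `{0,2}`,
`{4,5}`. -/
def extraEdgePartner : Fin 6 → Fin 6 :=
  ![2, 3, 0, 1, 5, 4]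

section Adjacency

variable {v w : Fin 6} {f g : {f // f ∈ faces}}

theorem xiI_adj_inl_inl : xiI.Adj (.inl v) (.inl w) ↔ w = extraEdgePartner v := by
  decide +revert

theorem xiI_adj_inl_inr : xiI.Adj (.inl v) (.inr f) ↔ v ∈ f.1 := by
  simp [xiI, xiRel]

theorem xiI_not_adj_inr_inr : ¬ xiI.Adj (.inr f) (.inr g) := by
  simp [xiI, xiRel]

theorem piI_not_adj_inl_inl : ¬ piI.Adj (.inl v) (.inl w) := by
  simp [piI, piRel]

theorem piI_adj_inl_inr : piI.Adj (.inl v) (.inr f) ↔ v ∈ f.1 := by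
  simp [piI, piRel]

theorem piI_not_adj_inr_inr : ¬ piI.Adj (.inr f) (.inr g) := by
  simp [piI, piRel]

end Adjacency

theorem xiI_degree_inl (v : Fin 6) : xiI.degree (.inl v) = 6 := by
  have vertex_neighbors : (xiI.neighborFinset (.inl v)).toLeft = {extraEdgePartner v} := by
    ext w
    simp [xiI_adj_inl_inl]
  have face_neighbors :
      (xiI.neighborFinset (.inl v)).toRight = Finset.univ.filter fun f => v ∈ f.1 := by
    ext f
    simp [xiI_adj_inl_inr]
  rw [SimpleGraph.degree, ← Finset.card_toLeft_add_card_toRight, vertex_neighbors, face_neighbors,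
    Finset.card_singleton, card_faces_containing]

theorem xiI_degree_inr (f : {f // f ∈ faces}) : xiI.degree (.inr f) = 3 := by
  have vertex_neighbors : (xiI.neighborFinset (.inr f)).toLeft = f.1 := by
    ext v
    simp [xiI.adj_comm (.inr f), xiI_adj_inl_inr]
  have face_neighbors : (xiI.neighborFinset (.inr f)).toRight = ∅ := by
    ext g
    simp [xiI_not_adj_inr_inr]
  rw [SimpleGraph.degree, ← Finset.card_toLeft_add_card_toRight, vertex_neighbors, face_neighbors,
    Finset.card_empty, card_of_mem_faces f.2]

theorem degreeChangingSubgraph_xiI : degreeChangingSubgraph xiI = piI := by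
  ext (v | f) (w | g)
  · simp [degreeChangingSubgraph_adj, xiI_degree_inl, piI_not_adj_inl_inl]
  · simp [degreeChangingSubgraph_adj, xiI_degree_inl, xiI_degree_inr, xiI_adj_inl_inr,
      piI_adj_inl_inr]
  · simp [degreeChangingSubgraph_adj, xiI_degree_inl, xiI_degree_inr, xiI.adj_comm (.inr f),
      piI.adj_comm (.inr f), xiI_adj_inl_inr, piI_adj_inl_inr]
  · simp [degreeChangingSubgraph_adj, xiI_degree_inr, piI_not_adj_inr_inr]

/-- Every automorphism of `Ξ_I` is also an automorphism of `Π_I`: it preserves the edge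
set of `Π_I` (equivalently, it permutes the three extra edges among themselves). -/
theorem stmt_11 (φ : xiI ≃g xiI) :
    ∀ a b : V16, piI.Adj (φ a) (φ b) ↔ piI.Adj a b := by
  intro a b
  rw [← degreeChangingSubgraph_xiI]
  exact degreeChangingSubgraph_map_adj_iff φ
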